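/- Let ω be a modulus of continuity of order n ∈ ℕ and let C₀ > 0. Then there exists a constant C = C(n,d,C₀,ω) such that the following holds. Let f ∈ L¹_loc(ℝ^d) with ‖f‖_{ω,ℝ^d} < ∞, let Q ⊂ ℝ^d be a cube with 0 < ℓ(Q) < 1/2, let t₀ ∈ Q, and let P_Q, P_{2Q} ∈ 𝒫_n be polynomials of near best approximation with constant C₀ for f on Q and on 2Q respectively, written as Taylor expansions P_Q(t) = Σ_{|k|≤n} A_{k,Q}·(t−t₀)^k and P_{2Q}(t) = Σ_{|k|≤n} A_{k,2Q}·(t−t₀)^k with respect to t₀ (k a multi-index). Then |A_{k,2Q} − A_{k,Q}| ≤ C·‖f‖_{ω,ℝ^d}·ω(ℓ(Q))·ℓ(Q)^{−|k|} for every multi-index k with 0 ≤ |k| ≤ n. -/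

import Mathlib

open MeasureTheory Filter Set Metric
open scoped ENNReal Topology InnerProductSpace

noncomputable section

/-- The axis-parallel closed cube in `ℝ^d` with center `x₀` and side length `l`. -/
def cube {d : ℕ} (x₀ : EuclideanSpace ℝ (Fin d)) (l : ℝ) : Set (EuclideanSpace ℝ (Fin d)) :=
  {x | ∀ i, |x i - x₀ i| ≤ l / 2}

/-- `𝒫_n`: functions on `ℝ^d` given by polynomials of total degree at most `n`. -/
def PolyLE (d n : ℕ) : Set (EuclideanSpace ℝ (Fin d) → ℝ) :=
  {P | ∃ p : MvPolynomial (Fin d) ℝ, p.totalDegree ≤ n ∧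
    ∀ x, MvPolynomial.eval (fun i => x i) p = P x}

/-- The Campanato-type Zygmund seminorm `‖f‖_{ω,D}` (valued in `ℝ≥0∞`). -/
def zygSeminorm {d : ℕ} (ω : ℝ → ℝ) (n : ℕ) (D : Set (EuclideanSpace ℝ (Fin d)))
    (f : EuclideanSpace ℝ (Fin d) → ℝ) : ℝ≥0∞ :=
  ⨆ (x₀ : EuclideanSpace ℝ (Fin d)) (l : ℝ) (_ : 0 < l) (_ : cube x₀ l ⊆ D),
    ⨅ (P : EuclideanSpace ℝ (Fin d) → ℝ) (_ : P ∈ PolyLE d n),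
      (ENNReal.ofReal (ω l * l ^ d))⁻¹ * ∫⁻ x in cube x₀ l, ENNReal.ofReal |f x - P x|

/-- The `L¹(D)` norm (valued in `ℝ≥0∞`). -/
def l1Norm {d : ℕ} (D : Set (EuclideanSpace ℝ (Fin d)))
    (f : EuclideanSpace ℝ (Fin d) → ℝ) : ℝ≥0∞ :=
  ∫⁻ x in D, ENNReal.ofReal |f x|

/-- The two regularity conditions of order `m` for a modulus of continuity:
`ω(t)/t^q` almost decreasing for some `m ≤ q < m+1`, and `ω(t)/t^r` almost
increasing for some `m-1 < r < m`. -/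
def ModulusConds (ω : ℝ → ℝ) (m : ℕ) : Prop :=
  (∃ q : ℝ, (m : ℝ) ≤ q ∧ q < (m : ℝ) + 1 ∧ ∃ C : ℝ, 0 < C ∧
      ∀ s t : ℝ, 1 < s → 0 < t → ω (s * t) ≤ C * s ^ q * ω t) ∧
  (∃ r : ℝ, (m : ℝ) - 1 < r ∧ r < (m : ℝ) ∧ ∃ C : ℝ, 0 < C ∧
      ∀ s t : ℝ, 0 < s → s < 1 → 0 < t → ω (s * t) ≤ C * s ^ r * ω t)

/-- `ω` is a modulus of continuity of order `n`: continuous, increasing, `ω(0)=0`,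
nonnegative, and `n` is the smallest positive integer satisfying the two
regularity conditions. -/
structure IsModulusOfOrder (ω : ℝ → ℝ) (n : ℕ) : Prop where
  continuousOn : ContinuousOn ω (Set.Ici 0)
  monotoneOn : MonotoneOn ω (Set.Ici 0)
  nonneg : ∀ t, 0 ≤ t → 0 ≤ ω t
  map_zero : ω 0 = 0
  npos : 0 < n
  conds : ModulusConds ω n
  minimal : ∀ m : ℕ, 0 < m → ModulusConds ω m → n ≤ m

/-- `ξ(r) = ∫_r^1 ω(t) t^{-n-1} dt`. -/
def xi (ω : ℝ → ℝ) (n : ℕ) (r : ℝ) : ℝ :=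
  ∫ t in Set.Ioc r 1, ω t / t ^ (n + 1)

/-- The associated modulus of continuity `ω̃(x) = ω(x)/max{1, ξ(x)}`. -/
def omegaTilde (ω : ℝ → ℝ) (n : ℕ) (x : ℝ) : ℝ :=
  ω x / max 1 (xi ω n x)

/-- `D ⊂ ℝ^d` is a bounded Lipschitz domain: it is open, connected, bounded, and near
every boundary point, after a rigid motion, it coincides inside an `R`-window with the
region above the graph of a Lipschitz function (with Lipschitz constant at most `δ`). -/
def IsLipschitzDomain {d : ℕ} (D : Set (EuclideanSpace ℝ (Fin d))) : Prop :=
  IsOpen D ∧ IsConnected D ∧ Bornology.IsBounded D ∧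
  ∃ δ R : ℝ, 0 < δ ∧ 0 < R ∧
    ∀ a ∈ frontier D,
      ∃ (g : EuclideanSpace ℝ (Fin d) ≃ᵢ EuclideanSpace ℝ (Fin d)) (j : Fin d)
        (A : EuclideanSpace ℝ (Fin d) → ℝ),
        g a = 0 ∧
        LipschitzWith (Real.toNNReal δ) A ∧
        (∀ x y : EuclideanSpace ℝ (Fin d), (∀ i, i ≠ j → x i = y i) → A x = A y) ∧
        (g '' D) ∩ cube 0 R = {x ∈ cube (0 : EuclideanSpace ℝ (Fin d)) R | A x < x j}

/-- `Ω` is the density of a `C^k`-smooth homogeneous Calderón–Zygmund kernel: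
homogeneous of degree `0`, `C^k` away from the origin, with zero mean on the
unit sphere. -/
structure IsCZDensity (d : ℕ) (k : ℕ∞) (Ω : EuclideanSpace ℝ (Fin d) → ℝ) : Prop where
  homog : ∀ c : ℝ, 0 < c → ∀ x : EuclideanSpace ℝ (Fin d), Ω (c • x) = Ω x
  smooth : ContDiffOn ℝ k Ω {x : EuclideanSpace ℝ (Fin d) | x ≠ 0}
  meanZero : ∫ x : Metric.sphere (0 : EuclideanSpace ℝ (Fin d)) 1,
      Ω x ∂((volume : Measure (EuclideanSpace ℝ (Fin d))).toSphere) = 0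

/-- `g = T_D f`: `g` vanishes off `D` and, for a.e. `y ∈ D`, `g y` is the principal
value `lim_{ε→0+} ∫_{x ∈ D, |y-x|>ε} f(x) K(y-x) dx` (here `f` is implicitly
multiplied by `χ_D`). -/
def IsRestrictedCZ {d : ℕ} (D : Set (EuclideanSpace ℝ (Fin d)))
    (K : EuclideanSpace ℝ (Fin d) → ℝ) (f g : EuclideanSpace ℝ (Fin d) → ℝ) : Prop :=
  (∀ y, y ∉ D → g y = 0) ∧
  ∀ᵐ y ∂(volume.restrict D),
    Tendsto (fun ε : ℝ => ∫ x in {x ∈ D | ε < dist y x}, f x * K (y - x))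
      (𝓝[>] (0 : ℝ)) (𝓝 (g y))

/-- `P` is a polynomial of near best approximation (with constant `C₀`) for `f`
on the cube with center `x₀` and side length `l`. -/
def IsNearBestApprox {d : ℕ} (ω : ℝ → ℝ) (n : ℕ) (D : Set (EuclideanSpace ℝ (Fin d)))
    (f : EuclideanSpace ℝ (Fin d) → ℝ) (C₀ : ℝ) (x₀ : EuclideanSpace ℝ (Fin d)) (l : ℝ)
    (P : EuclideanSpace ℝ (Fin d) → ℝ) : Prop :=
  P ∈ PolyLE d n ∧
    (ENNReal.ofReal (l ^ d))⁻¹ * ∫⁻ x in cube x₀ l, ENNReal.ofReal |f x - P x| ≤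
      ENNReal.ofReal (C₀ * ω l) * zygSeminorm ω n D f

/-!
A polynomial `r` of degree at most `n` is controlled by its `L¹` norm on any fixed set with nonempty
interior, because these polynomials form a finite-dimensional space that embeds into `L¹`. For a
cube `Q` of side `l` and `t₀ ∈ Q`, the substitution `x = t₀ + l y` turns the coefficient `r_k` of
`(x - t₀)^k` into `l^|k| r_k` and turns `Q` into a unit cube containing the origin. The latter
contains one of the `2^d` cubes of side `1/2` spanned from the origin into an orthant, so the
constant can be chosen independently of the position of `t₀` in `Q`. This is applied to
`r = P_{2Q} - P_Q`: the mean of `|r|` on `Q` is at most a multiple of `ω(l) + ω(2l)`, hence of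
`ω(l)` by doubling.
-/

section NormComparison

lemma exists_norm_le_mul_norm_of_injective {V E F : Type*} [AddCommGroup V] [Module ℝ V]
    [FiniteDimensional ℝ V] [NormedAddCommGroup E] [NormedSpace ℝ E] [NormedAddCommGroup F]
    [NormedSpace ℝ F] (S : V →ₗ[ℝ] E) {T : V →ₗ[ℝ] F} (hT : Function.Injective T) :
    ∃ C : ℝ, 0 < C ∧ ∀ v, ‖S v‖ ≤ C * ‖T v‖ := by
  let e : V ≃ₗ[ℝ] LinearMap.range T := LinearEquiv.ofInjective T hT
  obtain ⟨C, hC, hbound⟩ := (S ∘ₗ e.symm.toLinearMap).toContinuousLinearMap.bound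
  refine ⟨C, hC, fun v => ?_⟩
  simpa [e] using hbound (e v)

lemma continuous_eval_ofLp {ι : Type*} (p : MvPolynomial ι ℝ) :
    Continuous fun x : EuclideanSpace ℝ ι => MvPolynomial.eval x.ofLp p :=
  p.continuous_eval.comp (PiLp.continuous_ofLp 2 _)

variable {ι : Type*} [Finite ι]

lemma mvPolynomial_eq_zero_of_eqOn_isOpen {U : Set (EuclideanSpace ℝ ι)} (hU : IsOpen U)
    (hne : U.Nonempty) {p : MvPolynomial ι ℝ} (hp : ∀ x ∈ U, MvPolynomial.eval x.ofLp p = 0) :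
    p = 0 := by
  cases nonempty_fintype ι
  obtain ⟨c, hc⟩ := hne
  obtain ⟨ε, hε, hball⟩ := Metric.isOpen_iff.1 (hU.preimage (PiLp.continuous_toLp 2 _)) c.ofLp hc
  refine MvPolynomial.funext_set (fun i => ball (c i) ε)
    (fun i => by rw [Real.ball_eq_Ioo]; exact Ioo_infinite (by linarith)) fun x hx => ?_
  rw [← ball_pi _ hε] at hx
  simpa using hp _ (hball hx)

variable {μ : Measure (EuclideanSpace ℝ ι)} [IsFiniteMeasureOnCompacts μ]
  {K : Set (EuclideanSpace ℝ ι)}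

lemma integrable_restrict_eval_ofLp (hK : IsCompact K) (p : MvPolynomial ι ℝ) :
    Integrable (fun x => MvPolynomial.eval x.ofLp p) (μ.restrict K) :=
  (continuous_eval_ofLp p).continuousOn.integrableOn_compact hK

variable (μ) in
/-- The class in `L¹(K, μ)` of the function defined by a polynomial, for a compact set `K`. Its
injectivity on polynomials makes the `L¹` norm over `K` a norm on them. -/
def polyToL1 (hK : IsCompact K) : MvPolynomial ι ℝ →ₗ[ℝ] Lp ℝ 1 (μ.restrict K) where
  toFun p := (integrable_restrict_eval_ofLp hK p).toL1 _
  map_add' p q := by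
    simp only [map_add]
    rfl
  map_smul' a p := by
    simp only [MvPolynomial.smul_eval]
    rfl

lemma enorm_polyToL1 (hK : IsCompact K) (p : MvPolynomial ι ℝ) :
    ‖polyToL1 μ hK p‖ₑ = ∫⁻ x in K, ‖MvPolynomial.eval x.ofLp p‖ₑ ∂μ :=
  (integrable_restrict_eval_ofLp hK p).enorm_toL1

variable [μ.IsOpenPosMeasure]

lemma polyToL1_injective (hK : IsCompact K) (hne : (interior K).Nonempty) :
    Function.Injective (polyToL1 μ hK) := by
  refine (injective_iff_map_eq_zero _).2 fun p hp => ?_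
  have h_ae : (fun x => MvPolynomial.eval x.ofLp p) =ᵐ[μ.restrict K] 0 :=
    (Integrable.toL1_eq_toL1_iff _ _ (integrable_restrict_eval_ofLp hK p)
      (integrable_zero _ _ _)).1 hp
  exact mvPolynomial_eq_zero_of_eqOn_isOpen isOpen_interior hne <|
    Measure.eqOn_open_of_ae_eq (ae_restrict_of_ae_restrict_of_subset interior_subset h_ae)
      isOpen_interior (continuous_eval_ofLp p).continuousOn continuousOn_const

variable (μ) in
lemma exists_enorm_coeff_le_setLIntegral (n : ℕ) (hK : IsCompact K)
    (hne : (interior K).Nonempty) :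
    ∃ C : NNReal, 0 < C ∧ ∀ p : MvPolynomial ι ℝ, p.totalDegree ≤ n → ∀ k : ι →₀ ℕ,
      ‖p.coeff k‖ₑ ≤ C * ∫⁻ x in K, ‖MvPolynomial.eval x.ofLp p‖ₑ ∂μ := by
  let Pn := MvPolynomial.restrictTotalDegree ι ℝ n
  have : Fintype {k : ι →₀ ℕ // k.degree ≤ n} := (Finsupp.finite_of_degree_le n).fintype
  let coeffs : Pn →ₗ[ℝ] ({k : ι →₀ ℕ // k.degree ≤ n} → ℝ) :=
    LinearMap.pi fun k => MvPolynomial.lcoeff ℝ k.1 ∘ₗ Pn.subtype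
  have h_inj : Function.Injective ((polyToL1 μ hK).domRestrict Pn) :=
    (polyToL1_injective hK hne).comp Subtype.val_injective
  obtain ⟨C, hC, hbound⟩ := exists_norm_le_mul_norm_of_injective coeffs h_inj
  refine ⟨⟨C, hC.le⟩, hC, fun p hp k => ?_⟩
  by_cases hk : k.degree ≤ n
  · have h_norm : ‖p.coeff k‖ ≤ C * ‖polyToL1 μ hK p‖ :=
      (norm_le_pi_norm (coeffs ⟨p, (MvPolynomial.mem_restrictTotalDegree _ _ _).2 hp⟩)
        ⟨k, hk⟩).trans (hbound _)
    rw [← enorm_polyToL1 hK]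
    exact ENNReal.coe_le_coe.2 h_norm
  · rw [MvPolynomial.coeff_eq_zero_of_totalDegree_lt (hp.trans_lt (not_le.1 hk)), enorm_zero]
    exact zero_le

end NormComparison

section Dilation

variable {σ R : Type*} [CommSemiring R]

/-- The polynomial `p(aX)` obtained from `p` by substituting `aXᵢ` for every variable `Xᵢ`;
it transports estimates at the unit scale to cubes of side `a`. -/
def dilate (a : R) : MvPolynomial σ R →ₐ[R] MvPolynomial σ R :=
  MvPolynomial.aeval fun i => MvPolynomial.C a * MvPolynomial.X i

lemma dilate_monomial (a : R) (m : σ →₀ ℕ) (b : R) :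
    dilate a (MvPolynomial.monomial m b) = MvPolynomial.monomial m (a ^ m.degree * b) := by
  rw [dilate, MvPolynomial.aeval_monomial, MvPolynomial.monomial_eq]
  simp only [Finsupp.prod, mul_pow, Finset.prod_mul_distrib, Finset.prod_pow_eq_pow_sum,
    MvPolynomial.algebraMap_eq, Finsupp.degree_apply, map_mul, map_pow]
  ring

lemma coeff_dilate (a : R) (p : MvPolynomial σ R) (k : σ →₀ ℕ) :
    (dilate a p).coeff k = a ^ k.degree * p.coeff k := by
  classical
  induction p using MvPolynomial.induction_on' with
  | monomial m b =>
    rw [dilate_monomial, MvPolynomial.coeff_monomial, MvPolynomial.coeff_monomial]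
    split_ifs with h
    · rw [h]
    · rw [mul_zero]
  | add p q hp hq => rw [map_add, MvPolynomial.coeff_add, hp, hq, MvPolynomial.coeff_add, mul_add]

lemma eval_dilate (a : R) (p : MvPolynomial σ R) (x : σ → R) :
    MvPolynomial.eval x (dilate a p) = MvPolynomial.eval (a • x) p := by
  induction p using MvPolynomial.induction_on with
  | C b => simp [dilate]
  | add p q hp hq => rw [map_add, map_add, map_add, hp, hq]
  | mul_X p i hp => simp only [map_mul, hp]; simp [dilate]

lemma totalDegree_dilate_le (a : R) (p : MvPolynomial σ R) :
    (dilate a p).totalDegree ≤ p.totalDegree := by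
  refine MvPolynomial.totalDegree_le_of_support_subset fun k hk => ?_
  rw [MvPolynomial.mem_support_iff, coeff_dilate] at hk
  exact MvPolynomial.mem_support_iff.2 (right_ne_zero_of_mul hk)

end Dilation

lemma setLIntegral_image_add_smul {E : Type*} [NormedAddCommGroup E] [NormedSpace ℝ E]
    [FiniteDimensional ℝ E] [MeasurableSpace E] [BorelSpace E] (μ : Measure E) [μ.IsAddHaarMeasure]
    {a : ℝ} (ha : a ≠ 0) (t : E) {s : Set E} (hs : MeasurableSet s) (g : E → ℝ≥0∞) :
    ∫⁻ x in (fun y => t + a • y) '' s, g x ∂μ =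
      ENNReal.ofReal (|a| ^ Module.finrank ℝ E) * ∫⁻ y in s, g (t + a • y) ∂μ := by
  have h_deriv : ∀ y ∈ s,
      HasFDerivWithinAt (fun y => t + a • y) (a • ContinuousLinearMap.id ℝ E) s y :=
    fun y _ => ((hasFDerivWithinAt_id y s).const_smul a).const_add t
  have h_inj : InjOn (fun y => t + a • y) s :=
    ((add_right_injective t).comp (smul_right_injective E ha)).injOn
  have h_det : (a • ContinuousLinearMap.id ℝ E).det = a ^ Module.finrank ℝ E := by
    simp [ContinuousLinearMap.det]
  simp_rw [lintegral_image_eq_lintegral_abs_det_fderiv_mul μ hs h_deriv h_inj g, h_det, abs_pow]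
  exact lintegral_const_mul' _ _ ENNReal.ofReal_ne_top

section Cube

variable {d : ℕ}

lemma cube_subset_cube {l L : ℝ} (h : l ≤ L) (x₀ : EuclideanSpace ℝ (Fin d)) :
    cube x₀ l ⊆ cube x₀ L :=
  fun _ hx i => (hx i).trans (by linarith)

lemma isCompact_cube (x₀ : EuclideanSpace ℝ (Fin d)) (l : ℝ) : IsCompact (cube x₀ l) := by
  have h_preimage : cube x₀ l =
      (EuclideanSpace.equiv (Fin d) ℝ).toHomeomorph ⁻¹'
        Set.pi univ fun i => closedBall (x₀ i) (l / 2) := by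
    ext x
    simp [cube, Real.dist_eq]
  rw [h_preimage, Homeomorph.isCompact_preimage]
  exact isCompact_univ_pi fun i => isCompact_closedBall _ _

lemma interior_cube_nonempty (x₀ : EuclideanSpace ℝ (Fin d)) {l : ℝ} (hl : 0 < l) :
    (interior (cube x₀ l)).Nonempty := by
  refine ⟨x₀, mem_interior_iff_mem_nhds.2 <|
    mem_of_superset (closedBall_mem_nhds x₀ (half_pos hl)) fun x hx i => ?_⟩
  exact (PiLp.norm_apply_le (x - x₀) i).trans (mem_closedBall_iff_norm.1 hx)

/-- The cube of side `1/2` having the origin as a vertex and lying in the closed orthant with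
signs `σ`. -/
def orthantCube (σ : Fin d → ℤˣ) : Set (EuclideanSpace ℝ (Fin d)) :=
  cube (WithLp.toLp 2 fun i => ((σ i : ℤ) : ℝ) / 4) (1 / 2)

lemma isCompact_orthantCube (σ : Fin d → ℤˣ) : IsCompact (orthantCube σ) :=
  isCompact_cube _ _

lemma interior_orthantCube_nonempty (σ : Fin d → ℤˣ) : (interior (orthantCube σ)).Nonempty :=
  interior_cube_nonempty _ one_half_pos

lemma exists_image_orthantCube_subset_cube {x₀ t₀ : EuclideanSpace ℝ (Fin d)} {l : ℝ}
    (ht₀ : t₀ ∈ cube x₀ l) :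
    ∃ σ : Fin d → ℤˣ, (fun y => t₀ + l • y) '' orthantCube σ ⊆ cube x₀ l := by
  refine ⟨fun i => if t₀ i ≤ x₀ i then 1 else -1, ?_⟩
  rintro _ ⟨y, hy, rfl⟩ i
  have hyi := abs_le.1 (hy i)
  have hti := abs_le.1 (ht₀ i)
  rw [PiLp.add_apply, PiLp.smul_apply, smul_eq_mul, abs_le]
  by_cases hle : t₀ i ≤ x₀ i
  · simp only [hle, if_true, Units.val_one, Int.cast_one] at hyi
    constructor <;> nlinarith
  · simp only [hle, if_false, Units.val_neg, Units.val_one, Int.cast_neg, Int.cast_one] at hyi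
    rw [not_le] at hle
    constructor <;> nlinarith

lemma exists_enorm_coeff_le_setLIntegral_orthantCube (d n : ℕ) :
    ∃ C : NNReal, 0 < C ∧ ∀ (σ : Fin d → ℤˣ) (p : MvPolynomial (Fin d) ℝ), p.totalDegree ≤ n →
      ∀ k : Fin d →₀ ℕ,
        ‖p.coeff k‖ₑ ≤ C * ∫⁻ y in orthantCube σ, ‖MvPolynomial.eval y.ofLp p‖ₑ := by
  choose C hC hbound using fun σ : Fin d → ℤˣ =>
    exists_enorm_coeff_le_setLIntegral volume n (isCompact_orthantCube σ)
      (interior_orthantCube_nonempty σ)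
  refine ⟨∑ σ, C σ, Finset.sum_pos (fun σ _ => hC σ) Finset.univ_nonempty, fun σ p hp k => ?_⟩
  refine (hbound σ p hp k).trans ?_
  gcongr
  exact Finset.single_le_sum (fun _ _ => zero_le) (Finset.mem_univ σ)

lemma exists_enorm_coeff_le_setLIntegral_cube (d n : ℕ) :
    ∃ C : NNReal, 0 < C ∧ ∀ r : MvPolynomial (Fin d) ℝ, r.totalDegree ≤ n →
      ∀ (x₀ : EuclideanSpace ℝ (Fin d)) (l : ℝ), 0 < l → ∀ t₀ ∈ cube x₀ l, ∀ k : Fin d →₀ ℕ,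
        ENNReal.ofReal (l ^ d) * ‖l ^ k.degree * r.coeff k‖ₑ ≤
          C * ∫⁻ x in cube x₀ l, ‖MvPolynomial.eval (fun i => x i - t₀ i) r‖ₑ := by
  obtain ⟨C, hC, hbound⟩ := exists_enorm_coeff_le_setLIntegral_orthantCube d n
  refine ⟨C, hC, fun r hr x₀ l hl t₀ ht₀ k => ?_⟩
  obtain ⟨σ, hσ⟩ := exists_image_orthantCube_subset_cube ht₀
  have h_change : ∫⁻ x in (fun y => t₀ + l • y) '' orthantCube σ,
        ‖MvPolynomial.eval (fun i => x i - t₀ i) r‖ₑ =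
      ENNReal.ofReal (l ^ d) * ∫⁻ y in orthantCube σ, ‖MvPolynomial.eval y.ofLp (dilate l r)‖ₑ := by
    rw [setLIntegral_image_add_smul volume hl.ne' t₀ (isCompact_orthantCube σ).measurableSet,
      abs_of_pos hl, finrank_euclideanSpace_fin]
    simp only [eval_dilate, PiLp.add_apply, add_sub_cancel_left]
    rfl
  calc ENNReal.ofReal (l ^ d) * ‖l ^ k.degree * r.coeff k‖ₑ
      = ENNReal.ofReal (l ^ d) * ‖(dilate l r).coeff k‖ₑ := by rw [coeff_dilate]
    _ ≤ ENNReal.ofReal (l ^ d) *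
          (C * ∫⁻ y in orthantCube σ, ‖MvPolynomial.eval y.ofLp (dilate l r)‖ₑ) := by
        gcongr
        exact hbound σ _ ((totalDegree_dilate_le l r).trans hr) k
    _ = C * ∫⁻ x in (fun y => t₀ + l • y) '' orthantCube σ,
          ‖MvPolynomial.eval (fun i => x i - t₀ i) r‖ₑ := by rw [h_change, mul_left_comm]
    _ ≤ C * ∫⁻ x in cube x₀ l, ‖MvPolynomial.eval (fun i => x i - t₀ i) r‖ₑ := by
        gcongr

end Cube

lemma setLIntegral_enorm_sub_le_add {α E : Type*} [MeasurableSpace α] {μ : Measure α}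
    [NormedAddCommGroup E] {s t : Set α} (hst : s ⊆ t) {f g h : α → E}
    (hf : AEStronglyMeasurable f (μ.restrict s)) (hg : AEStronglyMeasurable g (μ.restrict s)) :
    ∫⁻ x in s, ‖h x - g x‖ₑ ∂μ ≤ (∫⁻ x in s, ‖f x - g x‖ₑ ∂μ) + ∫⁻ x in t, ‖f x - h x‖ₑ ∂μ :=
  calc ∫⁻ x in s, ‖h x - g x‖ₑ ∂μ
      ≤ ∫⁻ x in s, (‖f x - g x‖ₑ + ‖f x - h x‖ₑ) ∂μ := by
        refine lintegral_mono fun x => ?_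
        rw [← sub_sub_sub_cancel_left (g x) (h x) (f x)]
        exact enorm_sub_le
    _ = (∫⁻ x in s, ‖f x - g x‖ₑ ∂μ) + ∫⁻ x in s, ‖f x - h x‖ₑ ∂μ :=
        lintegral_add_left' (hf.sub hg).enorm _
    _ ≤ _ := by gcongr

section NearBestApprox

variable {d n : ℕ} {ω : ℝ → ℝ} {D : Set (EuclideanSpace ℝ (Fin d))}
  {f P Q : EuclideanSpace ℝ (Fin d) → ℝ} {C₀ l L : ℝ} {x₀ x₁ : EuclideanSpace ℝ (Fin d)}

lemma continuous_of_mem_polyLE (hP : P ∈ PolyLE d n) : Continuous P := by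
  obtain ⟨p, -, hp⟩ := hP
  exact (continuous_eval_ofLp p).congr hp

lemma IsNearBestApprox.setLIntegral_enorm_le (hP : IsNearBestApprox ω n D f C₀ x₀ l P)
    (hl : 0 < l) (hC₀ω : 0 ≤ C₀ * ω l) (hf : zygSeminorm ω n D f ≠ ⊤) :
    ∫⁻ x in cube x₀ l, ‖f x - P x‖ₑ ≤
      ENNReal.ofReal (l ^ d * (C₀ * ω l * (zygSeminorm ω n D f).toReal)) := by
  have h_ne_zero : ENNReal.ofReal (l ^ d) ≠ 0 := by
    rw [Ne, ENNReal.ofReal_eq_zero, not_le]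
    positivity
  have h_near := (ENNReal.inv_mul_le_iff h_ne_zero ENNReal.ofReal_ne_top).1 hP.2
  simp_rw [Real.enorm_eq_ofReal_abs]
  rwa [ENNReal.ofReal_mul (by positivity), ENNReal.ofReal_mul hC₀ω, ENNReal.ofReal_toReal hf]

lemma IsNearBestApprox.setLIntegral_enorm_sub_le (hP : IsNearBestApprox ω n D f C₀ x₀ l P)
    (hQ : IsNearBestApprox ω n D f C₀ x₁ L Q) (hlL : cube x₀ l ⊆ cube x₁ L) (hl : 0 < l)
    (hL : 0 < L) (hC₀ωl : 0 ≤ C₀ * ω l) (hC₀ωL : 0 ≤ C₀ * ω L) (hf : AEStronglyMeasurable f)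
    (hf_fin : zygSeminorm ω n D f ≠ ⊤) :
    ∫⁻ x in cube x₀ l, ‖Q x - P x‖ₑ ≤ ENNReal.ofReal
      ((l ^ d * (C₀ * ω l) + L ^ d * (C₀ * ω L)) * (zygSeminorm ω n D f).toReal) := by
  have hP_meas : AEStronglyMeasurable P := (continuous_of_mem_polyLE hP.1).aestronglyMeasurable
  calc ∫⁻ x in cube x₀ l, ‖Q x - P x‖ₑ
      ≤ (∫⁻ x in cube x₀ l, ‖f x - P x‖ₑ) + ∫⁻ x in cube x₁ L, ‖f x - Q x‖ₑ :=
        setLIntegral_enorm_sub_le_add hlL hf.restrict hP_meas.restrict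
    _ ≤ ENNReal.ofReal (l ^ d * (C₀ * ω l * (zygSeminorm ω n D f).toReal)) +
          ENNReal.ofReal (L ^ d * (C₀ * ω L * (zygSeminorm ω n D f).toReal)) :=
        add_le_add (hP.setLIntegral_enorm_le hl hC₀ωl hf_fin)
          (hQ.setLIntegral_enorm_le hL hC₀ωL hf_fin)
    _ = _ := by
        rw [← ENNReal.ofReal_add (by positivity) (by positivity)]
        ring_nf

end NearBestApprox

lemma exists_abs_coeff_sub_le_of_cube_subset (d n : ℕ) :
    ∃ K : ℝ, 0 < K ∧
      ∀ {ω : ℝ → ℝ} {D : Set (EuclideanSpace ℝ (Fin d))} {f : EuclideanSpace ℝ (Fin d) → ℝ}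
        {C₀ l L : ℝ} {x₀ x₁ t₀ : EuclideanSpace ℝ (Fin d)} {p q : MvPolynomial (Fin d) ℝ},
        AEStronglyMeasurable f → zygSeminorm ω n D f ≠ ⊤ → 0 < l → 0 < L →
        0 ≤ C₀ * ω l → 0 ≤ C₀ * ω L → cube x₀ l ⊆ cube x₁ L → t₀ ∈ cube x₀ l →
        p.totalDegree ≤ n → q.totalDegree ≤ n →
        IsNearBestApprox ω n D f C₀ x₀ l (fun x => p.eval fun i => x i - t₀ i) →
        IsNearBestApprox ω n D f C₀ x₁ L (fun x => q.eval fun i => x i - t₀ i) →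
        ∀ k : Fin d →₀ ℕ, l ^ d * (l ^ k.degree * |q.coeff k - p.coeff k|) ≤
          K * ((l ^ d * (C₀ * ω l) + L ^ d * (C₀ * ω L)) * (zygSeminorm ω n D f).toReal) := by
  obtain ⟨K, hK, hcoeff⟩ := exists_enorm_coeff_le_setLIntegral_cube d n
  refine ⟨K, hK, ?_⟩
  intro ω D f C₀ l L x₀ x₁ t₀ p q hf hf_fin hl hL hC₀ωl hC₀ωL hlL ht₀ hp hq hPp hPq k
  have h_coeff := hcoeff (q - p) ((MvPolynomial.totalDegree_sub q p).trans (max_le hq hp))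
    x₀ l hl t₀ ht₀ k
  simp only [map_sub, MvPolynomial.coeff_sub] at h_coeff
  have h_int := hPp.setLIntegral_enorm_sub_le hPq hlL hl hL hC₀ωl hC₀ωL hf hf_fin
  have h_bound := h_coeff.trans (mul_le_mul_right h_int _)
  rwa [Real.enorm_eq_ofReal_abs, ← ENNReal.ofReal_mul (by positivity),
    ← ENNReal.ofReal_coe_nnreal, ← ENNReal.ofReal_mul K.coe_nonneg,
    ENNReal.ofReal_le_ofReal_iff (by positivity), abs_mul,
    abs_of_nonneg (pow_nonneg hl.le _)] at h_bound

lemma ModulusConds.exists_doubling {ω : ℝ → ℝ} {m : ℕ} (h : ModulusConds ω m) :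
    ∃ A : ℝ, ∀ t, 0 < t → ω (2 * t) ≤ A * ω t := by
  obtain ⟨⟨q, -, -, C, -, hC⟩, -⟩ := h
  exact ⟨C * 2 ^ q, fun t ht => hC 2 t one_lt_two ht⟩

theorem statement_13_general {d : ℕ} (n : ℕ) (ω : ℝ → ℝ) (hω : ∀ t, 0 < t → 0 ≤ ω t)
    (hω_doubling : ∃ A : ℝ, ∀ t, 0 < t → ω (2 * t) ≤ A * ω t) (C₀ : ℝ) (hC₀ : 0 < C₀) :
    ∃ C : ℝ, 0 < C ∧
      ∀ (D : Set (EuclideanSpace ℝ (Fin d))) (f : EuclideanSpace ℝ (Fin d) → ℝ),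
        AEStronglyMeasurable f → zygSeminorm ω n D f < ⊤ →
        ∀ (x₀ : EuclideanSpace ℝ (Fin d)) (l : ℝ), 0 < l →
          ∀ t₀ ∈ cube x₀ l,
            ∀ p q : MvPolynomial (Fin d) ℝ,
              p.totalDegree ≤ n → q.totalDegree ≤ n →
              IsNearBestApprox ω n D f C₀ x₀ l
                (fun x => MvPolynomial.eval (fun i => x i - t₀ i) p) →
              IsNearBestApprox ω n D f C₀ x₀ (2 * l)
                (fun x => MvPolynomial.eval (fun i => x i - t₀ i) q) →
              ∀ k : Fin d →₀ ℕ,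
                |MvPolynomial.coeff k q - MvPolynomial.coeff k p| ≤
                  C * (zygSeminorm ω n D f).toReal * ω l * (l ^ (∑ i, k i))⁻¹ := by
  obtain ⟨K, hK, hcoeff⟩ := exists_abs_coeff_sub_le_of_cube_subset d n
  obtain ⟨A, hA⟩ := hω_doubling
  refine ⟨K * C₀ * (1 + 2 ^ d * |A|), by positivity, ?_⟩
  intro D f hf hf_fin x₀ l hl t₀ ht₀ p q hp hq hPp hPq k
  have hωl : 0 ≤ ω l := hω l hl
  have hω2l : 0 ≤ ω (2 * l) := hω (2 * l) (by positivity)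
  have h_doubling : ω (2 * l) ≤ |A| * ω l :=
    (hA l hl).trans (mul_le_mul_of_nonneg_right (le_abs_self A) hωl)
  have h_coeff := hcoeff hf hf_fin.ne hl (by positivity) (by positivity) (by positivity)
    (cube_subset_cube (by linarith) x₀) ht₀ hp hq hPp hPq k
  set S := (zygSeminorm ω n D f).toReal
  rw [le_mul_inv_iff₀ (by positivity), ← Finsupp.degree_eq_sum, mul_comm]
  refine le_of_mul_le_mul_left (h_coeff.trans ?_) (by positivity : 0 < l ^ d)
  calc K * ((l ^ d * (C₀ * ω l) + (2 * l) ^ d * (C₀ * ω (2 * l))) * S)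
      ≤ K * ((l ^ d * (C₀ * ω l) + (2 * l) ^ d * (C₀ * (|A| * ω l))) * S) := by gcongr
    _ = l ^ d * (K * C₀ * (1 + 2 ^ d * |A|) * S * ω l) := by
        rw [mul_pow]
        ring

/-- Taylor coefficients (at a point `t₀ ∈ Q`) of near best approximation polynomials
on `Q` and `2Q` differ by at most `C ‖f‖_{ω,ℝ^d} ω(ℓ) ℓ^{-|k|}`. -/
theorem statement_13 {d : ℕ} (n : ℕ) (ω : ℝ → ℝ) (hω : IsModulusOfOrder ω n)
    (C₀ : ℝ) (hC₀ : 0 < C₀) :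
    ∃ C : ℝ, 0 < C ∧
      ∀ f : EuclideanSpace ℝ (Fin d) → ℝ,
        LocallyIntegrable f → zygSeminorm ω n Set.univ f < ⊤ →
        ∀ (x₀ : EuclideanSpace ℝ (Fin d)) (l : ℝ), 0 < l → l < 1 / 2 →
          ∀ t₀ ∈ cube x₀ l,
            ∀ p q : MvPolynomial (Fin d) ℝ,
              p.totalDegree ≤ n → q.totalDegree ≤ n →
              IsNearBestApprox ω n Set.univ f C₀ x₀ l
                (fun x => MvPolynomial.eval (fun i => x i - t₀ i) p) →
              IsNearBestApprox ω n Set.univ f C₀ x₀ (2 * l)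
                (fun x => MvPolynomial.eval (fun i => x i - t₀ i) q) →
              ∀ k : Fin d →₀ ℕ, (∑ i, k i) ≤ n →
                |MvPolynomial.coeff k q - MvPolynomial.coeff k p| ≤
                  C * (zygSeminorm ω n Set.univ f).toReal * ω l *
                    (l ^ (∑ i, k i))⁻¹ := by
  obtain ⟨C, hC, hbound⟩ :=
    statement_13_general n ω (fun t ht => hω.nonneg t ht.le) hω.conds.exists_doubling C₀ hC₀
  exact ⟨C, hC, fun f hf hf_fin x₀ l hl _ t₀ ht₀ p q hp hq hPp hPq k _ =>
    hbound _ f hf.aestronglyMeasurable hf_fin x₀ l hl t₀ ht₀ p q hp hq hPp hPq k⟩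

end
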